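/- (Privacy of the membership-private extension against up to t colluders.) Fix an owner index j₀ ∈ {1,…,n}, a designated honest client j* ∈ {1,…,n}, data x ∈ 𝔽_q^ℓ, and, for every j' ≠ j*, fixed noise vectors z^{(j')} ∈ 𝔽_q^t. For j' ∈ {1,…,n} let x̄^{(j')} ∈ 𝔽_q^ℓ equal x if j' = j₀ and the zero vector otherwise. Fix a subset C ⊆ {1,…,n} with |C| ≤ t. If z^{(j*)} is drawn from the uniform distribution on 𝔽_q^t, then the distribution of the aggregated share tuple ( Σ_{j'=1}^n f_{x̄^{(j')}, z^{(j')}}(α_j) )_{j∈C} is the uniform distribution on 𝔽_q^C; in particular it does not depend on the data x nor on the owner index j₀. -/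

import Mathlib

open Polynomial

/-- The Lagrange/LCC encoding polynomial of data `x` and noise `z`. -/
noncomputable def lccEncode {F : Type*} [Field F] {ℓ t : ℕ} (β : Fin (ℓ + t) → F)
    (x : Fin ℓ → F) (z : Fin t → F) : F[X] :=
  Lagrange.interpolate Finset.univ β (Fin.append x z)

theorem pmf_map_uniform_of_shift {A B : Type*} [Fintype A] [Nonempty A] [AddGroup A]
    [Fintype B] [Nonempty B] [AddGroup B] (f : A → B)
    (h : ∀ v, ∃ d, ∀ w, f (w + d) = f w + v) :
    PMF.map f (PMF.uniformOfFintype A) = PMF.uniformOfFintype B := by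
  classical
  set μ := PMF.map f (PMF.uniformOfFintype A) with hμ
  have key : ∀ y y', μ y = μ y' := by
    intro y y'
    obtain ⟨d, hd⟩ := h (-y + y')
    rw [hμ, PMF.map_apply, PMF.map_apply, ← (Equiv.addRight d).tsum_eq
      (fun a => if y' = f a then PMF.uniformOfFintype A a else 0)]
    refine tsum_congr fun a => ?_
    have : (y' = f (a + d)) ↔ (y = f a) := by
      rw [hd]
      constructor
      · intro e
        have : f a = y' - (-y + y') := eq_sub_of_add_eq e.symm
        rw [this]; simp [sub_eq_add_neg]
      · intro e
        rw [← e]; simp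
    simp [this]
  ext y
  have hs := μ.tsum_coe
  rw [tsum_congr (fun b => key b y), tsum_fintype, Finset.sum_const, nsmul_eq_mul,
    Finset.card_univ] at hs
  rw [PMF.uniformOfFintype_apply]
  exact ENNReal.eq_inv_of_mul_eq_one_left (by rw [mul_comm]; exact hs)

theorem lccEncode_surj {F : Type*} [Field F]
    (ℓ t n : ℕ) 
    (β : Fin (ℓ + t) → F) (hβ : Function.Injective β)
    (α : Fin n → F) (hα : Function.Injective α)
    (hαβ : ∀ j u, α j ≠ β u)
    (C : Finset (Fin n)) (hC : C.card ≤ t) (v : C → F) :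
    ∃ d : Fin t → F, ∀ j : C, (lccEncode β 0 d).eval (α j) = v j := by
  classical
  let Q : F[X] := ∏ u : Fin ℓ, (X - Polynomial.C (β (Fin.castAdd t u)))
  have hQ : ∀ j, Q.eval (α j) ≠ 0 := by
    intro j
    simp only [Q, eval_prod, eval_sub, eval_X, eval_C]
    exact Finset.prod_ne_zero_iff.2 fun u _ => sub_ne_zero.2 (hαβ _ _)
  let r : Fin n → F := fun j => if h : j ∈ C then v ⟨j, h⟩ / Q.eval (α j) else 0
  let R : F[X] := Lagrange.interpolate C α r
  have hR : R.degree < C.card := Lagrange.degree_interpolate_lt _ hα.injOn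
  have hQd : Q.degree = ℓ := by
    simp [Q, degree_prod]
  have hdeg : (Q * R).degree < (Finset.univ : Finset (Fin (ℓ + t))).card := by
    rw [degree_mul, hQd, Finset.card_univ, Fintype.card_fin, Nat.cast_add]
    refine (WithBot.add_lt_add_iff_left (by simp)).2 (hR.trans_le (by exact_mod_cast hC))
  refine ⟨fun u => (Q * R).eval (β (Fin.natAdd ℓ u)), fun j => ?_⟩
  have : Q * R = lccEncode β 0 (fun u => (Q * R).eval (β (Fin.natAdd ℓ u))) := by
    refine Lagrange.eq_interpolate_of_eval_eq _ hβ.injOn hdeg fun i _ => ?_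
    refine Fin.addCases (fun u => ?_) (fun u => ?_) i
    · rw [Fin.append_left, eval_mul]
      have : Q.eval (β (Fin.castAdd t u)) = 0 := by
        simp only [Q, eval_prod]
        exact Finset.prod_eq_zero (Finset.mem_univ u) (by simp)
      simp [this]
    · rw [Fin.append_right]
  rw [← this, eval_mul, Lagrange.eval_interpolate_at_node _ hα.injOn j.2]
  simp only [r, j.2, dif_pos]
  exact mul_div_cancel₀ _ (hQ _)

theorem lccEncode_add {F : Type*} [Field F] {ℓ t : ℕ} (β : Fin (ℓ + t) → F)
    (x : Fin ℓ → F) (z d : Fin t → F) :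
    lccEncode β x (z + d) = lccEncode β x z + lccEncode β 0 d := by
  unfold lccEncode
  rw [← map_add]
  congr 1
  funext i
  refine Fin.addCases (fun u => ?_) (fun u => ?_) i <;> simp

/-- Privacy of the membership-private extension against up to `t` colluders: with
one designated honest client `j*` drawing its noise uniformly at random (all other
clients' noises being arbitrary but fixed), the tuple of aggregated shares
`(Σ_{j'} f_{x̄^{(j')}, z^{(j')}}(α_j))_{j ∈ C}` observed by any set `C` of at most
`t` colluding clients is uniform on `𝔽_q^C`, hence reveals nothing about the data
`x` or the owner index `j₀`. -/
theorem secfc_membership_privacy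
    {F : Type*} [Field F] [Fintype F]
    (ℓ t n : ℕ) (hℓ : 0 < ℓ) (ht : 0 < t) (hn : 0 < n)
    (β : Fin (ℓ + t) → F) (hβ : Function.Injective β)
    (α : Fin n → F) (hα : Function.Injective α)
    (hαβ : ∀ j u, α j ≠ β u)
    (j₀ jstar : Fin n) (x : Fin ℓ → F) (z : Fin n → Fin t → F)
    (C : Finset (Fin n)) (hC : C.card ≤ t) :
    PMF.map
        (fun (w : Fin t → F) (j : C) =>
          ∑ j' : Fin n,
            (lccEncode β (if j' = j₀ then x else 0)
              (if j' = jstar then w else z j')).eval (α (j : Fin n)))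
        (PMF.uniformOfFintype (Fin t → F))
      = PMF.uniformOfFintype (C → F) := by
  refine pmf_map_uniform_of_shift _ fun v => ?_
  obtain ⟨d, hd⟩ := lccEncode_surj ℓ t n β hβ α hα hαβ C hC v
  refine ⟨d, fun w => funext fun j => ?_⟩
  have : ∀ j' : Fin n, (lccEncode β (if j' = j₀ then x else 0)
        (if j' = jstar then w + d else z j')).eval (α (j : Fin n))
      = (lccEncode β (if j' = j₀ then x else 0)
        (if j' = jstar then w else z j')).eval (α (j : Fin n))
        + if j' = jstar then v j else 0 := by
    intro j'
    by_cases h : j' = jstar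
    · simp only [h, if_true]
      rw [lccEncode_add, eval_add, hd]
    · simp [h]
  simp only [this, Finset.sum_add_distrib, Pi.add_apply]
  simp
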